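/- For every integer r ≥ 1, every integer i, and every integer n ≥ 1, the generalized cluster variables satisfy X(i, n) · X(i+1, n) = X(i, n+1) · X(i+1, n-1) + 1 in the field ℚ(x_1,…,x_r). (This expresses, for the almost split sequence 0 → E_i[n] → E_i[n+1] ⊕ E_{i+1}[n-1] → E_{i+1}[n] → 0 in the category of nilpotent representations of the cyclic quiver, the relation X_M · X_{τM} = X_B + 1, where X of a direct sum is the product of the X's of the summands.) -/

import Mathlib

/-- The ambient field `ℚ(x_1, …, x_r)`, realized as the fraction field of the
polynomial ring over `ℚ` in variables indexed by `ZMod r` (so indices are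
automatically read modulo `r`). -/
noncomputable abbrev CyclicField (r : ℕ) : Type :=
  FractionRing (MvPolynomial (ZMod r) ℚ)

/-- The variable `x_i` for `i : ℤ`, with `x_{i+r} = x_i`. -/
noncomputable def xv (r : ℕ) (i : ℤ) : CyclicField r :=
  algebraMap (MvPolynomial (ZMod r) ℚ) (CyclicField r) (MvPolynomial.X (i : ZMod r))

/-- The generalized cluster variable `X(l, n)` (the image of the indecomposable
nilpotent representation `E_l[n]` under the Caldero–Chapoton map):
`X(l,0) = 1` and, for `n ≥ 1`,
`X(l,n) = x_{l+n}/x_l + Σ_{k=1}^{n-1} (x_{l+n}·x_{l+r-1})/(x_{l+k-1}·x_{l+k}) + x_{l+r-1}/x_{l+n-1}`. -/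
noncomputable def Xgcv (r : ℕ) (l : ℤ) : ℕ → CyclicField r
  | 0 => 1
  | n + 1 =>
      xv r (l + n + 1) / xv r l
        + ∑ k ∈ Finset.Icc 1 n,
            (xv r (l + n + 1) * xv r (l + r - 1)) / (xv r (l + k - 1) * xv r (l + k))
        + xv r (l + r - 1) / xv r (l + n)

/- Since `x_{l+r-1} = x_{l-1}`, the element `X(l, n)` is
`x_{l-1} x_{l+n} ∑_{k=l-1}^{l+n-1} 1 / (x_k x_{k+1})`. Entries of this form, attached to pairs of
integers, satisfy a Ptolemy relation because the sums are additive over consecutive intervals. The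
four integers `i - 1, i, i + n, i + n + 1` give the theorem, the `1` being the product of the
entries of the pairs `(i - 1, i)` and `(i + n, i + n + 1)` of neighbours. -/

section Sums

variable {M : Type*} [AddCommMonoid M]

theorem sum_Ico_add_sum_Ico_consecutive {α : Type*} [LinearOrder α] [LocallyFiniteOrder α]
    (f : α → M) {a b c : α} (hab : a ≤ b) (hbc : b ≤ c) :
    ∑ k ∈ Finset.Ico a b, f k + ∑ k ∈ Finset.Ico b c, f k = ∑ k ∈ Finset.Ico a c, f k := by
  rw [← Finset.sum_union (Finset.Ico_disjoint_Ico_consecutive a b c),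
    Finset.Ico_union_Ico_eq_Ico hab hbc]

theorem sum_Icc_one_eq_sum_Ico_add_natCast (f : ℤ → M) (a : ℤ) (n : ℕ) :
    ∑ k ∈ Finset.Icc 1 n, f (a + k - 1) = ∑ k ∈ Finset.Ico a (a + n), f k := by
  induction n with
  | zero => simp
  | succ n ih =>
    rw [Finset.sum_Icc_succ_top (by lia), ih, Nat.cast_succ, ← add_assoc, add_sub_cancel_right,
      Finset.sum_Ico_add_eq_sum_Ico_add_one (by lia)]

end Sums

section Frieze

variable {K : Type*} [Semifield K]

/-- The entry at `(a, b)` of the infinite frieze pattern (array with unit determinants on its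
adjacent `2 × 2` diamonds) determined by a sequence `u` of nonzero scalars. It is `0` for
`b ≤ a`, so only the half of the pattern with `a ≤ b` is encoded. -/
noncomputable def friezeEntry (u : ℤ → K) (a b : ℤ) : K :=
  u a * u b * ∑ k ∈ Finset.Ico a b, 1 / (u k * u (k + 1))

theorem friezeEntry_self_add_one {u : ℤ → K} {a : ℤ} (ha : u a ≠ 0) (ha' : u (a + 1) ≠ 0) :
    friezeEntry u a (a + 1) = 1 := by
  rw [friezeEntry, ← Finset.sum_Ico_add_eq_sum_Ico_add_one le_rfl, Finset.Ico_self,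
    Finset.sum_empty, zero_add, mul_one_div_cancel (mul_ne_zero ha ha')]

theorem friezeEntry_ptolemy (u : ℤ → K) {a b c d : ℤ}
    (hab : a ≤ b) (hbc : b ≤ c) (hcd : c ≤ d) :
    friezeEntry u a c * friezeEntry u b d =
      friezeEntry u a d * friezeEntry u b c + friezeEntry u a b * friezeEntry u c d := by
  unfold friezeEntry
  rw [← sum_Ico_add_sum_Ico_consecutive _ hab (hbc.trans hcd),
    ← sum_Ico_add_sum_Ico_consecutive _ hab hbc, ← sum_Ico_add_sum_Ico_consecutive _ hbc hcd]
  ring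

theorem friezeEntry_mul_friezeEntry_add_one {u : ℤ → K} (hu : ∀ k, u k ≠ 0) {a b : ℤ}
    (hab : a < b) :
    friezeEntry u a b * friezeEntry u (a + 1) (b + 1) =
      friezeEntry u a (b + 1) * friezeEntry u (a + 1) b + 1 := by
  rw [friezeEntry_ptolemy u (by lia) (Int.add_one_le_of_lt hab) (by lia),
    friezeEntry_self_add_one (hu _) (hu _), friezeEntry_self_add_one (hu _) (hu _), mul_one]

theorem friezeEntry_sub_one_add_natCast_add_one {u : ℤ → K} (hu : ∀ k, u k ≠ 0) (a : ℤ) (n : ℕ) :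
    friezeEntry u (a - 1) (a + n + 1) =
      u (a + n + 1) / u a
        + ∑ k ∈ Finset.Icc 1 n, (u (a + n + 1) * u (a - 1)) / (u (a + k - 1) * u (a + k))
        + u (a - 1) / u (a + n) := by
  have hmid : ∑ k ∈ Finset.Ico a (a + n), 1 / (u k * u (k + 1)) =
      ∑ k ∈ Finset.Icc 1 n, 1 / (u (a + k - 1) * u (a + k)) := by
    simp only [← sum_Icc_one_eq_sum_Ico_add_natCast, sub_add_cancel]
  have hsplit : ∑ k ∈ Finset.Ico (a - 1) (a + n + 1), 1 / (u k * u (k + 1)) =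
      1 / (u (a - 1) * u a) + ∑ k ∈ Finset.Icc 1 n, 1 / (u (a + k - 1) * u (a + k))
        + 1 / (u (a + n) * u (a + n + 1)) := by
    rw [← Finset.sum_Ico_add_eq_sum_Ico_add_one (by lia),
      ← Finset.insert_Ico_add_one_left_eq_Ico (by lia), Finset.sum_insert (by simp),
      sub_add_cancel, hmid]
  simp only [← mul_one_div (u (a + n + 1) * u (a - 1)), ← Finset.mul_sum]
  rw [friezeEntry, hsplit]
  field_simp [hu]

end Frieze

section ClusterVariables

variable (r : ℕ)

theorem xv_ne_zero (i : ℤ) : xv r i ≠ 0 :=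
  (FaithfulSMul.algebraMap_eq_zero_iff _ _).not.mpr (MvPolynomial.X_ne_zero _)

theorem xv_add_self (i : ℤ) : xv r (i + r) = xv r i := by
  simp [xv]

theorem Xgcv_eq_friezeEntry (l : ℤ) (n : ℕ) :
    Xgcv r l n = friezeEntry (xv r) (l - 1) (l + n) := by
  cases n with
  | zero =>
    have hentry := friezeEntry_self_add_one (xv_ne_zero r (l - 1)) (xv_ne_zero r _)
    simpa [Xgcv] using hentry.symm
  | succ n =>
    have hper : xv r (l + r - 1) = xv r (l - 1) := by
      rw [← xv_add_self r (l - 1), sub_add_eq_add_sub]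
    rw [Nat.cast_succ, ← add_assoc, friezeEntry_sub_one_add_natCast_add_one (xv_ne_zero r), Xgcv,
      hper]

end ClusterVariables

/-- `X(i, n) · X(i+1, n) = X(i, n+1) · X(i+1, n-1) + 1` for `r ≥ 1`, `i ∈ ℤ`, `n ≥ 1`. -/
theorem stmt2 (r : ℕ) (hr : 1 ≤ r) (i : ℤ) (n : ℕ) (hn : 1 ≤ n) :
    Xgcv r i n * Xgcv r (i + 1) n = Xgcv r i (n + 1) * Xgcv r (i + 1) (n - 1) + 1 := by
  have hshift : i + 1 + (n : ℤ) = i + n + 1 := by ring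
  have hpred : i + 1 + ((n - 1 : ℕ) : ℤ) = i + n := by lia
  simp only [Xgcv_eq_friezeEntry, hshift, hpred, Nat.cast_succ, ← add_assoc,
    add_sub_right_comm i 1 1]
  exact friezeEntry_mul_friezeEntry_add_one (xv_ne_zero r) (by lia)
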